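/- For a bounded double complex of complex vector spaces, the following are equivalent: (i) the ∂∂̄-lemma holds; (ii) the natural map H_BC^{p,q} → H_A^{p,q} induced by the identity is injective for every (p,q). Moreover, when these hold, all the natural identity-induced maps H_BC^{p,q} → H_∂̄^{p,q}, H_BC^{p,q} → H_∂^{p,q}, H_∂̄^{p,q} → H_A^{p,q}, H_∂^{p,q} → H_A^{p,q} are isomorphisms, and the natural map ⊕_{p+q=k} H_BC^{p,q} → H_dR^k is an isomorphism for every k. -/

import Mathlib

open Submodule

/-- A double complex of complex vector spaces, presented as a bigraded direct-sum
decomposition `K p q` of an ambient space `V`, together with anticommuting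
differentials `d1 = ∂` (of bidegree `(1,0)`) and `d2 = ∂̄` (of bidegree `(0,1)`). -/
structure DoubleComplex (V : Type*) [AddCommGroup V] [Module ℂ V] where
  K : ℤ → ℤ → Submodule ℂ V
  isInternal : DirectSum.IsInternal fun pq : ℤ × ℤ => K pq.1 pq.2
  d1 : V →ₗ[ℂ] V
  d2 : V →ₗ[ℂ] V
  d1_mem : ∀ p q : ℤ, ∀ x ∈ K p q, d1 x ∈ K (p + 1) q
  d2_mem : ∀ p q : ℤ, ∀ x ∈ K p q, d2 x ∈ K p (q + 1)
  d1_d1 : d1 ∘ₗ d1 = 0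
  d2_d2 : d2 ∘ₗ d2 = 0
  anticomm : d1 ∘ₗ d2 + d2 ∘ₗ d1 = 0

/-- The dimension (as a natural number) of the quotient of a submodule `M` of `V`
by (the trace on `M` of) a submodule `N`. -/
noncomputable def qdim {V : Type*} [AddCommGroup V] [Module ℂ V]
    (M N : Submodule ℂ V) : ℕ :=
  Module.finrank ℂ (↥M ⧸ N.comap M.subtype)

/-- The linear map between quotients `M₁/N₁ → M₂/N₂` induced by the identity,
for `M₁ ≤ M₂` and `N₁ ≤ N₂`. -/
def quotMap {V : Type*} [AddCommGroup V] [Module ℂ V] {M₁ N₁ M₂ N₂ : Submodule ℂ V}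
    (hM : M₁ ≤ M₂) (hN : N₁ ≤ N₂) :
    (↥M₁ ⧸ N₁.comap M₁.subtype) →ₗ[ℂ] (↥M₂ ⧸ N₂.comap M₂.subtype) :=
  Submodule.mapQ _ _ (Submodule.inclusion hM) fun _ hx => hN hx

namespace DoubleComplex

variable {V : Type*} [AddCommGroup V] [Module ℂ V] (D : DoubleComplex V)

/-- A double complex is bounded if only finitely many components are non-zero. -/
def Bounded : Prop := Set.Finite {pq : ℤ × ℤ | D.K pq.1 pq.2 ≠ ⊥}

lemma d1_d1_apply (x : V) : D.d1 (D.d1 x) = 0 := by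
  simpa using LinearMap.ext_iff.mp D.d1_d1 x

lemma d2_d2_apply (x : V) : D.d2 (D.d2 x) = 0 := by
  simpa using LinearMap.ext_iff.mp D.d2_d2 x

lemma anticomm_apply (x : V) : D.d1 (D.d2 x) + D.d2 (D.d1 x) = 0 := by
  simpa using LinearMap.ext_iff.mp D.anticomm x

/-- Numerator `ker ∂̄ ∩ K^{p,q}` of the Dolbeault cohomology. -/
def dolN (p q : ℤ) : Submodule ℂ V := LinearMap.ker D.d2 ⊓ D.K p q
/-- Denominator `∂̄ K^{p,q-1}` of the Dolbeault cohomology. -/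
def dolD (p q : ℤ) : Submodule ℂ V := (D.K p (q - 1)).map D.d2
/-- Numerator `ker ∂ ∩ K^{p,q}` of the conjugate Dolbeault cohomology. -/
def conjN (p q : ℤ) : Submodule ℂ V := LinearMap.ker D.d1 ⊓ D.K p q
/-- Denominator `∂ K^{p-1,q}` of the conjugate Dolbeault cohomology. -/
def conjD (p q : ℤ) : Submodule ℂ V := (D.K (p - 1) q).map D.d1
/-- Numerator `ker ∂ ∩ ker ∂̄ ∩ K^{p,q}` of the Bott-Chern cohomology. -/
def bcN (p q : ℤ) : Submodule ℂ V := LinearMap.ker D.d1 ⊓ LinearMap.ker D.d2 ⊓ D.K p q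
/-- Denominator `∂∂̄ K^{p-1,q-1}` of the Bott-Chern cohomology. -/
def bcD (p q : ℤ) : Submodule ℂ V := (D.K (p - 1) (q - 1)).map (D.d1 ∘ₗ D.d2)
/-- Numerator `ker ∂∂̄ ∩ K^{p,q}` of the Aeppli cohomology. -/
def aeN (p q : ℤ) : Submodule ℂ V := LinearMap.ker (D.d1 ∘ₗ D.d2) ⊓ D.K p q
/-- Denominator `∂ K^{p-1,q} + ∂̄ K^{p,q-1}` of the Aeppli cohomology. -/
def aeD (p q : ℤ) : Submodule ℂ V := (D.K (p - 1) q).map D.d1 ⊔ (D.K p (q - 1)).map D.d2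

/-- The degree-`k` part `Tot^k = ⊕_{p+q=k} K^{p,q}` of the total complex. -/
def Tot (k : ℤ) : Submodule ℂ V := ⨆ p : ℤ, D.K p (k - p)
/-- The total differential `d = ∂ + ∂̄`. -/
def dT : V →ₗ[ℂ] V := D.d1 + D.d2
/-- Numerator `ker d ∩ Tot^k` of the de Rham cohomology of the total complex. -/
def dRN (k : ℤ) : Submodule ℂ V := LinearMap.ker D.dT ⊓ D.Tot k
/-- Denominator `d (Tot^{k-1})` of the de Rham cohomology of the total complex. -/
def dRD (k : ℤ) : Submodule ℂ V := (D.Tot (k - 1)).map D.dT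

/-- Hodge number `h_∂̄^{p,q}`. -/
noncomputable def hDol (p q : ℤ) : ℕ := qdim (D.dolN p q) (D.dolD p q)
/-- Conjugate Hodge number `h_∂^{p,q}`. -/
noncomputable def hConj (p q : ℤ) : ℕ := qdim (D.conjN p q) (D.conjD p q)
/-- Bott-Chern number `h_BC^{p,q}`. -/
noncomputable def hBC (p q : ℤ) : ℕ := qdim (D.bcN p q) (D.bcD p q)
/-- Aeppli number `h_A^{p,q}`. -/
noncomputable def hAe (p q : ℤ) : ℕ := qdim (D.aeN p q) (D.aeD p q)
/-- Betti number `b_k` of the total complex. -/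
noncomputable def b (k : ℤ) : ℕ := qdim (D.dRN k) (D.dRD k)

/-- The `∂∂̄`-lemma property:
`ker ∂ ∩ ker ∂̄ ∩ (im ∂ + im ∂̄) ∩ K^{p,q} = ∂∂̄ K^{p-1,q-1}` for every `(p,q)`. -/
def SatisfiesDdbarLemma : Prop :=
  ∀ p q : ℤ,
    LinearMap.ker D.d1 ⊓ LinearMap.ker D.d2 ⊓ (D.conjD p q ⊔ D.dolD p q) ⊓ D.K p q =
      D.bcD p q

end DoubleComplex

namespace DoubleComplex

variable {V : Type*} [AddCommGroup V] [Module ℂ V] (D : DoubleComplex V)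

lemma dolD_le_ker (p q : ℤ) : D.dolD p q ≤ LinearMap.ker D.d2 := by
  rintro x ⟨y, -, rfl⟩
  exact LinearMap.mem_ker.mpr (D.d2_d2_apply y)

lemma dolD_le_K (p q : ℤ) : D.dolD p q ≤ D.K p q := by
  rintro x ⟨y, hy, rfl⟩
  have h := D.d2_mem p (q - 1) y hy
  rwa [show q - 1 + 1 = q by ring] at h

lemma conjD_le_ker (p q : ℤ) : D.conjD p q ≤ LinearMap.ker D.d1 := by
  rintro x ⟨y, -, rfl⟩
  exact LinearMap.mem_ker.mpr (D.d1_d1_apply y)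

lemma conjD_le_K (p q : ℤ) : D.conjD p q ≤ D.K p q := by
  rintro x ⟨y, hy, rfl⟩
  have h := D.d1_mem (p - 1) q y hy
  rwa [show p - 1 + 1 = p by ring] at h

lemma ker_d2_le_ker_comp : LinearMap.ker D.d2 ≤ LinearMap.ker (D.d1 ∘ₗ D.d2) := by
  intro x hx
  have hx' : D.d2 x = 0 := hx
  simp only [LinearMap.mem_ker, LinearMap.comp_apply, hx', map_zero]

lemma ker_d1_le_ker_comp : LinearMap.ker D.d1 ≤ LinearMap.ker (D.d1 ∘ₗ D.d2) := by
  intro x hx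
  have hx' : D.d1 x = 0 := hx
  have h := D.anticomm_apply x
  rw [hx', map_zero, add_zero] at h
  exact LinearMap.mem_ker.mpr h

lemma bcD_le_dolD (p q : ℤ) : D.bcD p q ≤ D.dolD p q := by
  rintro x ⟨y, hy, rfl⟩
  refine ⟨-(D.d1 y), neg_mem ?_, ?_⟩
  · have h := D.d1_mem (p - 1) (q - 1) y hy
    rwa [show p - 1 + 1 = p by ring] at h
  · rw [map_neg, LinearMap.comp_apply]
    exact neg_eq_of_add_eq_zero_left (D.anticomm_apply y)

lemma bcD_le_conjD (p q : ℤ) : D.bcD p q ≤ D.conjD p q := by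
  rintro x ⟨y, hy, rfl⟩
  refine ⟨D.d2 y, ?_, rfl⟩
  have h := D.d2_mem (p - 1) (q - 1) y hy
  rwa [show q - 1 + 1 = q by ring] at h

end DoubleComplex

namespace DoubleComplex

variable {V : Type*} [AddCommGroup V] [Module ℂ V] (D : DoubleComplex V)

lemma bcN_le_dRN (k p : ℤ) : D.bcN p (k - p) ≤ D.dRN k := by
  rintro x ⟨⟨h1, h2⟩, hK⟩
  constructor
  · have h1' : D.d1 x = 0 := h1
    have h2' : D.d2 x = 0 := h2
    show D.dT x = 0
    simp [dT, LinearMap.add_apply, h1', h2']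
  · exact le_iSup (fun r => D.K r (k - r)) p hK

lemma bcD_le_dRD (k p : ℤ) : D.bcD p (k - p) ≤ D.dRD k := by
  rintro x ⟨y, hy, rfl⟩
  refine ⟨D.d2 y, ?_, ?_⟩
  · have h := D.d2_mem (p - 1) (k - p - 1) y hy
    rw [show k - p - 1 + 1 = k - p by ring] at h
    have hle : D.K (p - 1) (k - p) ≤ D.Tot (k - 1) := by
      have h2 := le_iSup (fun r => D.K r (k - 1 - r)) (p - 1)
      rwa [show k - 1 - (p - 1) = k - p by ring] at h2
    exact hle h
  · show D.dT (D.d2 y) = (D.d1 ∘ₗ D.d2) y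
    have h2 : D.d2 (D.d2 y) = 0 := D.d2_d2_apply y
    simp [dT, LinearMap.add_apply, LinearMap.comp_apply, h2]

open DirectSum in
/-- The natural map `⊕_{p+q=k} H_BC^{p,q} → H_dR^k`. -/
noncomputable def bcToDR (k : ℤ) :
    (⨁ p : ℤ, ↥(D.bcN p (k - p)) ⧸ (D.bcD p (k - p)).comap (D.bcN p (k - p)).subtype)
      →ₗ[ℂ] (↥(D.dRN k) ⧸ (D.dRD k).comap (D.dRN k).subtype) :=
  DirectSum.toModule ℂ ℤ _ fun p => quotMap (D.bcN_le_dRN k p) (D.bcD_le_dRD k p)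

end DoubleComplex

namespace DoubleComplex

variable {V : Type*} [AddCommGroup V] [Module ℂ V] (D : DoubleComplex V)

/-- The natural map `H_BC^{p,q} → H_A^{p,q}` induced by the identity. -/
def mapBCAe (p q : ℤ) :
    (↥(D.bcN p q) ⧸ (D.bcD p q).comap (D.bcN p q).subtype) →ₗ[ℂ]
    (↥(D.aeN p q) ⧸ (D.aeD p q).comap (D.aeN p q).subtype) :=
  quotMap (le_inf (inf_le_left.trans (inf_le_right.trans D.ker_d2_le_ker_comp)) inf_le_right)
    ((D.bcD_le_conjD p q).trans le_sup_left)

/-- The natural map `H_BC^{p,q} → H_∂̄^{p,q}` induced by the identity. -/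
def mapBCDol (p q : ℤ) :
    (↥(D.bcN p q) ⧸ (D.bcD p q).comap (D.bcN p q).subtype) →ₗ[ℂ]
    (↥(D.dolN p q) ⧸ (D.dolD p q).comap (D.dolN p q).subtype) :=
  quotMap (le_inf (inf_le_left.trans inf_le_right) inf_le_right) (D.bcD_le_dolD p q)

/-- The natural map `H_BC^{p,q} → H_∂^{p,q}` induced by the identity. -/
def mapBCConj (p q : ℤ) :
    (↥(D.bcN p q) ⧸ (D.bcD p q).comap (D.bcN p q).subtype) →ₗ[ℂ]
    (↥(D.conjN p q) ⧸ (D.conjD p q).comap (D.conjN p q).subtype) :=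
  quotMap (le_inf (inf_le_left.trans inf_le_left) inf_le_right) (D.bcD_le_conjD p q)

/-- The natural map `H_∂̄^{p,q} → H_A^{p,q}` induced by the identity. -/
def mapDolAe (p q : ℤ) :
    (↥(D.dolN p q) ⧸ (D.dolD p q).comap (D.dolN p q).subtype) →ₗ[ℂ]
    (↥(D.aeN p q) ⧸ (D.aeD p q).comap (D.aeN p q).subtype) :=
  quotMap (inf_le_inf_right (D.K p q) D.ker_d2_le_ker_comp) le_sup_right

/-- The natural map `H_∂^{p,q} → H_A^{p,q}` induced by the identity. -/
def mapConjAe (p q : ℤ) :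
    (↥(D.conjN p q) ⧸ (D.conjD p q).comap (D.conjN p q).subtype) →ₗ[ℂ]
    (↥(D.aeN p q) ⧸ (D.aeD p q).comap (D.aeN p q).subtype) :=
  quotMap (inf_le_inf_right (D.K p q) D.ker_d1_le_ker_comp) le_sup_left

end DoubleComplex

namespace DoubleComplex

section QuotAux
variable {V : Type*} [AddCommGroup V] [Module ℂ V] {M₁ N₁ M₂ N₂ : Submodule ℂ V}

lemma quotMap_inj_iff (hM : M₁ ≤ M₂) (hN : N₁ ≤ N₂) :
    Function.Injective (quotMap hM hN) ↔ ∀ x ∈ M₁, x ∈ N₂ → x ∈ N₁ := by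
  rw [injective_iff_map_eq_zero]
  constructor
  · intro h x hx hx2
    have := h (Submodule.Quotient.mk ⟨x, hx⟩) (by
      rw [quotMap, Submodule.mapQ_apply, Submodule.Quotient.mk_eq_zero]
      exact hx2)
    rw [Submodule.Quotient.mk_eq_zero] at this
    exact this
  · intro h a ha
    obtain ⟨⟨x, hx⟩, rfl⟩ := Submodule.Quotient.mk_surjective _ a
    rw [quotMap, Submodule.mapQ_apply, Submodule.Quotient.mk_eq_zero] at ha
    rw [Submodule.Quotient.mk_eq_zero]
    exact h x hx ha

lemma quotMap_surj (hM : M₁ ≤ M₂) (hN : N₁ ≤ N₂)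
    (h : ∀ x ∈ M₂, ∃ y ∈ M₁, y - x ∈ N₂) : Function.Surjective (quotMap hM hN) := by
  intro a
  obtain ⟨⟨x, hx⟩, rfl⟩ := Submodule.Quotient.mk_surjective _ a
  obtain ⟨y, hy, hyx⟩ := h x hx
  refine ⟨Submodule.Quotient.mk ⟨y, hy⟩, ?_⟩
  rw [quotMap, Submodule.mapQ_apply, Submodule.Quotient.eq]
  exact hyx

end QuotAux

variable {V : Type*} [AddCommGroup V] [Module ℂ V] (D : DoubleComplex V)

lemma d2_d1_apply (x : V) : D.d2 (D.d1 x) = - D.d1 (D.d2 x) :=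
  eq_neg_of_add_eq_zero_right (D.anticomm_apply x)

lemma d1_mem' {p q r : ℤ} {x : V} (hx : x ∈ D.K p q) (h : p + 1 = r) : D.d1 x ∈ D.K r q :=
  h ▸ D.d1_mem p q x hx

lemma d2_mem' {p q r : ℤ} {x : V} (hx : x ∈ D.K p q) (h : q + 1 = r) : D.d2 x ∈ D.K p r :=
  h ▸ D.d2_mem p q x hx

/-- Usable form of the lemma. -/
lemma SatisfiesDdbarLemma.out {D : DoubleComplex V} (H : D.SatisfiesDdbarLemma) {p q : ℤ} {x : V}
    (h1 : D.d1 x = 0) (h2 : D.d2 x = 0) (hx : x ∈ D.conjD p q ⊔ D.dolD p q) : x ∈ D.bcD p q := by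
  rw [← H p q]
  exact ⟨⟨⟨h1, h2⟩, hx⟩, sup_le (D.conjD_le_K p q) (D.dolD_le_K p q) hx⟩

lemma bcD_le_ker (p q : ℤ) : D.bcD p q ≤ LinearMap.ker D.d1 ⊓ LinearMap.ker D.d2 :=
  le_inf ((D.bcD_le_conjD p q).trans (D.conjD_le_ker p q))
    ((D.bcD_le_dolD p q).trans (D.dolD_le_ker p q))

lemma ddbar_iff : D.SatisfiesDdbarLemma ↔ ∀ p q : ℤ, Function.Injective (D.mapBCAe p q) := by
  constructor
  · intro H p q
    refine (quotMap_inj_iff _ _).2 ?_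
    rintro x ⟨⟨h1, h2⟩, -⟩ hx
    exact H.out h1 h2 hx
  · intro H p q
    apply le_antisymm
    · rintro x ⟨⟨⟨h1, h2⟩, hx⟩, hK⟩
      exact (quotMap_inj_iff _ _).1 (H p q) x ⟨⟨h1, h2⟩, hK⟩ hx
    · intro x hx
      have hc := D.bcD_le_conjD p q hx
      exact ⟨⟨D.bcD_le_ker p q hx, Submodule.mem_sup_left hc⟩, D.conjD_le_K p q hc⟩

/-- `∂x` is `∂∂̄`-exact once it is `∂̄`-closed. -/
lemma SatisfiesDdbarLemma.d1_ex {D : DoubleComplex V} (H : D.SatisfiesDdbarLemma) {p q : ℤ} {x : V}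
    (hx : x ∈ D.K p q) (h : D.d1 (D.d2 x) = 0) :
    ∃ y ∈ D.K p (q - 1), D.d1 (D.d2 y) = D.d1 x := by
  have : D.d1 x ∈ D.bcD (p + 1) q := by
    apply H.out (D.d1_d1_apply x) (by rw [d2_d1_apply, h, neg_zero])
    apply Submodule.mem_sup_left
    exact ⟨x, by simpa using hx, rfl⟩
  obtain ⟨y, hy, hyx⟩ := this
  exact ⟨y, by simpa using hy, hyx⟩

lemma SatisfiesDdbarLemma.d2_ex {D : DoubleComplex V} (H : D.SatisfiesDdbarLemma) {p q : ℤ} {x : V}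
    (hx : x ∈ D.K p q) (h : D.d1 (D.d2 x) = 0) :
    ∃ y ∈ D.K (p - 1) q, D.d2 (D.d1 y) = D.d2 x := by
  have : D.d2 x ∈ D.bcD p (q + 1) := by
    apply H.out h (D.d2_d2_apply x)
    apply Submodule.mem_sup_right
    exact ⟨x, by simpa using hx, rfl⟩
  obtain ⟨y, hy, hyx⟩ := this
  refine ⟨-y, neg_mem (by simpa using hy), ?_⟩
  rw [d2_d1_apply, map_neg, map_neg, neg_neg]
  exact hyx

lemma bij_BCDol (H : D.SatisfiesDdbarLemma) (p q : ℤ) : Function.Bijective (D.mapBCDol p q) := by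
  constructor
  · refine (quotMap_inj_iff _ _).2 ?_
    rintro x ⟨⟨h1, h2⟩, -⟩ hx
    exact H.out h1 h2 (Submodule.mem_sup_right hx)
  · apply quotMap_surj
    rintro x ⟨h2, hK⟩
    have h2' : D.d2 x = 0 := h2
    obtain ⟨y, hy, e⟩ := H.d1_ex hK (by rw [h2', map_zero])
    have hm : D.d2 y ∈ D.dolD p q := ⟨y, hy, rfl⟩
    refine ⟨x - D.d2 y, ⟨⟨?_, ?_⟩, sub_mem hK (D.dolD_le_K p q hm)⟩, ?_⟩
    · simp [e]
    · simp [h2', d2_d2_apply]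
    · simpa using hm

lemma bij_BCConj (H : D.SatisfiesDdbarLemma) (p q : ℤ) : Function.Bijective (D.mapBCConj p q) := by
  constructor
  · refine (quotMap_inj_iff _ _).2 ?_
    rintro x ⟨⟨h1, h2⟩, -⟩ hx
    exact H.out h1 h2 (Submodule.mem_sup_left hx)
  · apply quotMap_surj
    rintro x ⟨h1, hK⟩
    have h1' : D.d1 x = 0 := h1
    obtain ⟨y, hy, e⟩ := H.d2_ex hK (D.ker_d1_le_ker_comp h1)
    have hm : D.d1 y ∈ D.conjD p q := ⟨y, hy, rfl⟩
    refine ⟨x - D.d1 y, ⟨⟨?_, ?_⟩, sub_mem hK (D.conjD_le_K p q hm)⟩, ?_⟩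
    · simp [h1', d1_d1_apply]
    · simp [e]
    · simpa using hm

lemma bij_DolAe (H : D.SatisfiesDdbarLemma) (p q : ℤ) : Function.Bijective (D.mapDolAe p q) := by
  constructor
  · refine (quotMap_inj_iff _ _).2 ?_
    rintro x ⟨h2, -⟩ hx
    obtain ⟨a, ha, b, hb, rfl⟩ := Submodule.mem_sup.1 hx
    refine add_mem ?_ hb
    have hb2 : D.d2 b = 0 := D.dolD_le_ker p q hb
    have h2' : D.d2 (a + b) = 0 := h2
    rw [map_add, hb2, add_zero] at h2'
    exact D.bcD_le_dolD p q (H.out (D.conjD_le_ker p q ha) h2' (Submodule.mem_sup_left ha))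
  · apply quotMap_surj
    rintro x ⟨h, hK⟩
    obtain ⟨y, hy, e⟩ := H.d2_ex hK h
    have hm : D.d1 y ∈ D.conjD p q := ⟨y, hy, rfl⟩
    refine ⟨x - D.d1 y, ⟨?_, sub_mem hK (D.conjD_le_K p q hm)⟩, ?_⟩
    · simp [e]
    · rw [sub_sub_cancel_left]
      exact neg_mem (Submodule.mem_sup_left hm)

lemma bij_ConjAe (H : D.SatisfiesDdbarLemma) (p q : ℤ) : Function.Bijective (D.mapConjAe p q) := by
  constructor
  · refine (quotMap_inj_iff _ _).2 ?_
    rintro x ⟨h1, -⟩ hx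
    obtain ⟨a, ha, b, hb, rfl⟩ := Submodule.mem_sup.1 hx
    refine add_mem ha ?_
    have ha1 : D.d1 a = 0 := D.conjD_le_ker p q ha
    have h1' : D.d1 (a + b) = 0 := h1
    rw [map_add, ha1, zero_add] at h1'
    exact D.bcD_le_conjD p q (H.out h1' (D.dolD_le_ker p q hb) (Submodule.mem_sup_right hb))
  · apply quotMap_surj
    rintro x ⟨h, hK⟩
    obtain ⟨y, hy, e⟩ := H.d1_ex hK h
    have hm : D.d2 y ∈ D.dolD p q := ⟨y, hy, rfl⟩
    refine ⟨x - D.d2 y, ⟨?_, sub_mem hK (D.dolD_le_K p q hm)⟩, ?_⟩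
    · simp [e]
    · rw [sub_sub_cancel_left]
      exact neg_mem (Submodule.mem_sup_right hm)

/-- Projection to the component of bidegree `(p,q)`. -/
noncomputable def pr (p q : ℤ) : V →ₗ[ℂ] V :=
  (D.K p q).subtype ∘ₗ
    DirectSum.component ℂ (ℤ × ℤ) (fun pq : ℤ × ℤ => D.K pq.1 pq.2) (p, q) ∘ₗ
    (LinearEquiv.ofBijective
      (DirectSum.coeLinearMap fun pq : ℤ × ℤ => D.K pq.1 pq.2) D.isInternal).symm.toLinearMap

lemma pr_mem (p q : ℤ) (x : V) : D.pr p q x ∈ D.K p q := by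
  simp [pr]

lemma pr_of_mem {r s : ℤ} {x : V} (hx : x ∈ D.K r s) (p q : ℤ) :
    D.pr p q x = if r = p ∧ s = q then x else 0 := by
  have key : (LinearEquiv.ofBijective
      (DirectSum.coeLinearMap fun pq : ℤ × ℤ => D.K pq.1 pq.2) D.isInternal).symm x =
      DirectSum.lof ℂ (ℤ × ℤ) (fun pq : ℤ × ℤ => D.K pq.1 pq.2) (r, s) ⟨x, hx⟩ := by
    rw [LinearEquiv.symm_apply_eq]
    exact (DirectSum.coeLinearMap_lof (fun pq : ℤ × ℤ => D.K pq.1 pq.2) (r, s) ⟨x, hx⟩).symm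
  simp only [pr, LinearMap.comp_apply, LinearEquiv.coe_coe, key]
  split_ifs with h
  · obtain ⟨rfl, rfl⟩ := h
    simp
  · rw [DirectSum.component.of, dif_neg (by simpa using h)]
    simp

lemma pr_ind {P : V → Prop} (x : V) (h : ∀ p q, ∀ x ∈ D.K p q, P x) (h0 : P 0)
    (ha : ∀ x y, P x → P y → P (x + y)) : P x := by
  have hx : x ∈ ⨆ pq : ℤ × ℤ, D.K pq.1 pq.2 := by
    rw [D.isInternal.submodule_iSup_eq_top]; trivial
  exact Submodule.iSup_induction (motive := P) _ hx (fun pq x hx => h _ _ x hx) h0 ha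

lemma pr_d1 (p q : ℤ) (x : V) : D.pr p q (D.d1 x) = D.d1 (D.pr (p - 1) q x) := by
  induction x using D.pr_ind with
  | h r s x hx =>
    rw [D.pr_of_mem (D.d1_mem r s x hx), D.pr_of_mem hx]
    have : r + 1 = p ↔ r = p - 1 := by omega
    simp only [this]
    split_ifs <;> simp
  | h0 => simp
  | ha x y hx hy => simp [hx, hy]

lemma pr_d2 (p q : ℤ) (x : V) : D.pr p q (D.d2 x) = D.d2 (D.pr p (q - 1) x) := by
  induction x using D.pr_ind with
  | h r s x hx =>
    rw [D.pr_of_mem (D.d2_mem r s x hx), D.pr_of_mem hx]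
    have : s + 1 = q ↔ s = q - 1 := by omega
    simp only [this]
    split_ifs <;> simp
  | h0 => simp
  | ha x y hx hy => simp [hx, hy]

lemma pr_dT (p q : ℤ) (x : V) :
    D.pr p q (D.dT x) = D.d1 (D.pr (p - 1) q x) + D.d2 (D.pr p (q - 1) x) := by
  simp [dT, pr_d1, pr_d2]

lemma le_Tot {k p q : ℤ} (h : p + q = k) : D.K p q ≤ D.Tot k := by
  obtain rfl : q = k - p := by omega
  exact le_iSup (fun p => D.K p (k - p)) p

lemma dT_mem {k l : ℤ} (hkl : k + 1 = l) {x : V} (hx : x ∈ D.Tot k) : D.dT x ∈ D.Tot l := by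
  induction hx using Submodule.iSup_induction' with
  | mem p x hx =>
    exact add_mem (D.le_Tot (by omega) (D.d1_mem _ _ x hx)) (D.le_Tot (by omega) (D.d2_mem _ _ x hx))
  | zero => simp
  | add x y _ _ hx hy => rw [map_add]; exact add_mem hx hy

lemma Tot_eq_sum {k : ℤ} {x : V} (hx : x ∈ D.Tot k) :
    ∃ S : Finset ℤ, ∀ T, S ⊆ T → x = ∑ p ∈ T, D.pr p (k - p) x := by
  induction hx using Submodule.iSup_induction' with
  | mem p x hx =>
    refine ⟨{p}, fun T hT => ?_⟩
    rw [Finset.sum_eq_single p]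
    · rw [D.pr_of_mem hx, if_pos ⟨rfl, rfl⟩]
    · intro b _ hb
      rw [D.pr_of_mem hx, if_neg (fun h => hb h.1.symm)]
    · intro h
      exact absurd (hT (Finset.mem_singleton_self p)) h
  | zero => exact ⟨∅, fun T _ => by simp⟩
  | add x y _ _ hx hy =>
    obtain ⟨S, hS⟩ := hx
    obtain ⟨S', hS'⟩ := hy
    refine ⟨S ∪ S', fun T hT => ?_⟩
    simp only [map_add, Finset.sum_add_distrib]
    rw [← hS T (Finset.union_subset_left hT), ← hS' T (Finset.union_subset_right hT)]

lemma pr_sum {k : ℤ} (S : Finset ℤ) (y : ℤ → V) (hy : ∀ p, y p ∈ D.K p (k - p)) (p : ℤ) :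
    D.pr p (k - p) (∑ r ∈ S, y r) = if p ∈ S then y p else 0 := by
  rw [map_sum, ← Finset.sum_ite_eq S p y]
  refine Finset.sum_congr rfl fun r _ => ?_
  rw [D.pr_of_mem (hy r)]
  by_cases h : p = r
  · subst h; simp
  · rw [if_neg h, if_neg (fun h' => h h'.1.symm)]

lemma bcToDR_lof (k p : ℤ) (x : V) (hx : x ∈ D.bcN p (k - p)) :
    D.bcToDR k (DirectSum.lof ℂ ℤ (fun p : ℤ => ↥(D.bcN p (k - p)) ⧸
      (D.bcD p (k - p)).comap (D.bcN p (k - p)).subtype) p (Submodule.Quotient.mk ⟨x, hx⟩)) =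
    Submodule.Quotient.mk ⟨x, D.bcN_le_dRN k p hx⟩ := by
  rw [bcToDR, DirectSum.toModule_lof]
  rfl

lemma bcToDR_sum (k : ℤ) (S : Finset ℤ) (x : ℤ → V) (hx : ∀ p, x p ∈ D.bcN p (k - p)) :
    D.bcToDR k (∑ p ∈ S, DirectSum.lof ℂ ℤ (fun p : ℤ => ↥(D.bcN p (k - p)) ⧸
      (D.bcD p (k - p)).comap (D.bcN p (k - p)).subtype) p
        (Submodule.Quotient.mk ⟨x p, hx p⟩)) =
    Submodule.Quotient.mk ⟨∑ p ∈ S, x p, sum_mem fun p _ => D.bcN_le_dRN k p (hx p)⟩ := by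
  rw [map_sum]
  simp only [bcToDR_lof]
  rw [← Submodule.mkQ_apply]
  simp only [← Submodule.mkQ_apply]
  rw [← map_sum]
  congr 1
  ext
  simp

lemma surj_DR (H : D.SatisfiesDdbarLemma) (k : ℤ) : Function.Surjective (D.bcToDR k) := by
  intro a
  obtain ⟨⟨x, hd, hx⟩, rfl⟩ := Submodule.Quotient.mk_surjective _ a
  have hd' : D.dT x = 0 := hd
  have rel : ∀ p q, D.d1 (D.pr (p - 1) q x) + D.d2 (D.pr p (q - 1) x) = 0 := fun p q => by
    rw [← pr_dT, hd', map_zero]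
  have rel1 : ∀ p, D.d2 (D.pr p (k - p) x) = - D.d1 (D.pr (p - 1) (k - (p - 1)) x) := fun p => by
    have := rel p (k - p + 1)
    rw [show k - p + 1 - 1 = k - p by ring, show k - p + 1 = k - (p - 1) by ring] at this
    exact eq_neg_of_add_eq_zero_right this
  have ex : ∀ p, ∃ y ∈ D.K p (k - 1 - p), D.d1 (D.d2 y) = D.d1 (D.pr p (k - p) x) ∧
      (D.pr p (k - p) x = 0 → y = 0) := by
    intro p
    by_cases h0 : D.pr p (k - p) x = 0
    · exact ⟨0, zero_mem _, by simp [h0], fun _ => rfl⟩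
    · obtain ⟨y, hy, e⟩ := H.d1_ex (D.pr_mem p (k - p) x) (by
        rw [rel1, map_neg, d1_d1_apply, neg_zero])
      exact ⟨y, by rwa [show k - p - 1 = k - 1 - p by ring] at hy, e, fun h => absurd h h0⟩
  choose y hyK hy hy0 using ex
  obtain ⟨S, hS⟩ := D.Tot_eq_sum hx
  have hS0 : ∀ p, p ∉ S → D.pr p (k - p) x = 0 := by
    intro p hp
    have h1 := hS S subset_rfl
    have h2 := hS (insert p S) (Finset.subset_insert p S)
    rw [Finset.sum_insert hp, ← h1] at h2
    simpa using h2
  set Y := ∑ p ∈ S, y p with hY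
  have hYT : Y ∈ D.Tot (k - 1) := sum_mem fun p _ => D.le_Tot (by ring) (hyK p)
  have prY : ∀ p, D.pr p (k - 1 - p) Y = y p := by
    intro p
    rw [hY, D.pr_sum S y hyK]
    split_ifs with h
    · rfl
    · exact (hy0 p (hS0 p h)).symm
  set z := x - D.dT Y with hz
  have hzT : z ∈ D.Tot k := sub_mem hx (D.dT_mem (by ring) hYT)
  have prz : ∀ p, D.pr p (k - p) z = D.pr p (k - p) x - (D.d1 (y (p - 1)) + D.d2 (y p)) := by
    intro p
    rw [hz, map_sub, pr_dT, ← prY (p - 1), ← prY p]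
    rw [show k - 1 - (p - 1) = k - p by ring, show k - 1 - p = k - p - 1 by ring]
  have hbc : ∀ p, D.pr p (k - p) z ∈ D.bcN p (k - p) := by
    intro p
    refine ⟨⟨?_, ?_⟩, D.pr_mem _ _ _⟩
    · show D.d1 _ = 0
      rw [prz]
      simp [d1_d1_apply, hy]
    · show D.d2 _ = 0
      rw [prz]
      simp [d2_d2_apply, d2_d1_apply, hy, rel1]
  obtain ⟨T, hT⟩ := D.Tot_eq_sum hzT
  refine ⟨_, (D.bcToDR_sum k T (fun p => D.pr p (k - p) z) hbc).trans ?_⟩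
  rw [Submodule.Quotient.eq]
  show (∑ p ∈ T, D.pr p (k - p) z) - x ∈ D.dRD k
  rw [← hT T subset_rfl]
  refine ⟨-Y, neg_mem hYT, ?_⟩
  rw [hz]
  simp

lemma inj_DR (H : D.SatisfiesDdbarLemma) (k : ℤ) : Function.Injective (D.bcToDR k) := by
  classical
  rw [injective_iff_map_eq_zero]
  intro w hw
  have ex : ∀ p, ∃ r : ↥(D.bcN p (k - p)), Submodule.Quotient.mk r = w p := fun p =>
    Submodule.Quotient.mk_surjective _ (w p)
  choose r hr using ex
  have hw' : w = ∑ p ∈ DFinsupp.support w, DirectSum.lof ℂ ℤ (fun p : ℤ => ↥(D.bcN p (k - p)) ⧸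
      (D.bcD p (k - p)).comap (D.bcN p (k - p)).subtype) p
        (Submodule.Quotient.mk ⟨(r p : V), (r p).2⟩) := by
    conv_lhs => rw [← DirectSum.sum_support_of w]
    refine Finset.sum_congr rfl fun p _ => ?_
    rw [← hr p]
    rfl
  rw [hw', bcToDR_sum, Submodule.Quotient.mk_eq_zero] at hw
  obtain ⟨y, hy, e⟩ := hw
  replace e : D.dT y = ∑ p ∈ DFinsupp.support w, (r p : V) := e
  ext p
  by_contra hne
  have hp : p ∈ DFinsupp.support w := by
    rw [DFinsupp.mem_support_iff]; exact hne
  have e2 : (r p : V) = D.d1 (D.pr (p - 1) (k - p) y) + D.d2 (D.pr p (k - p - 1) y) := by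
    rw [← pr_dT, e, D.pr_sum _ (fun p => (r p : V)) (fun p => (r p).2.2), if_pos hp]
  apply hne
  rw [← hr p]
  refine (Submodule.Quotient.mk_eq_zero _).2 ?_
  show (r p : V) ∈ D.bcD p (k - p)
  refine H.out (r p).2.1.1 (r p).2.1.2 ?_
  rw [e2]
  exact Submodule.add_mem_sup ⟨_, D.pr_mem _ _ _, rfl⟩ ⟨_, D.pr_mem _ _ _, rfl⟩

end DoubleComplex

open DoubleComplex in
/-- For a bounded double complex of complex vector spaces: the `∂∂̄`-lemma holds if and
only if the natural map `H_BC^{p,q} → H_A^{p,q}` is injective for every `(p,q)`; and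
when it holds, all the natural identity-induced maps `H_BC → H_∂̄`, `H_BC → H_∂`,
`H_∂̄ → H_A`, `H_∂ → H_A` are isomorphisms, and the natural map
`⊕_{p+q=k} H_BC^{p,q} → H_dR^k` is an isomorphism for every `k`. -/
theorem ddbar_lemma_characterization {V : Type*} [AddCommGroup V] [Module ℂ V]
    (D : DoubleComplex V) (hb : D.Bounded) :
    (D.SatisfiesDdbarLemma ↔ ∀ p q : ℤ, Function.Injective (D.mapBCAe p q)) ∧
    (D.SatisfiesDdbarLemma →
      (∀ p q : ℤ,
        Function.Bijective (D.mapBCDol p q) ∧ Function.Bijective (D.mapBCConj p q) ∧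
        Function.Bijective (D.mapDolAe p q) ∧ Function.Bijective (D.mapConjAe p q)) ∧
      ∀ k : ℤ, Function.Bijective (D.bcToDR k)) := by
  exact ⟨D.ddbar_iff, fun H => ⟨fun p q => ⟨D.bij_BCDol H p q, D.bij_BCConj H p q,
    D.bij_DolAe H p q, D.bij_ConjAe H p q⟩, fun k => ⟨D.inj_DR H k, D.surj_DR H k⟩⟩⟩
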